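/- Let X be a compact metric space, f : X → X a continuous map, and Λ ⊆ X a closed f-invariant subset such that f|_Λ : Λ → Λ is minimal and equicontinuous. Let Γ be a countable dense subset of Λ. Then for every ε > 0, if X = ⋃_{x∈Λ} closure(V_ε^s(x)), then X = ⋃_{x∈Γ} closure(V_{2ε}^s(x)). -/

import Mathlib

/-!
A point `x ∈ Λ` can be replaced by a point `y ∈ Γ` so close to it that, by equicontinuity, the
forward orbits of `x` and `y` stay `η`-close for all time. By the triangle inequality
`V_ε^s(x) ⊆ V_{ε+η}^s(y)`, and this inclusion passes to closures; taking `η = ε` gives `2ε`.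
-/

open Filter Topology

/-- `V_ε^s(x)`: points whose forward orbit eventually stays ε-close (in limsup) to that of `x`. -/
def Vs {X : Type*} [MetricSpace X] (f : X → X) (x : X) (ε : ℝ) : Set X :=
  {y | Filter.limsup (fun i : ℕ => dist (f^[i] x) (f^[i] y)) Filter.atTop ≤ ε}

open Classical in
/-- A DC1-`n`-`δ`-scrambled tuple. -/
def DC1Scrambled {X : Type*} [MetricSpace X] (f : X → X) {n : ℕ} (δ : ℝ)
    (x : Fin n → X) : Prop :=
  Filter.limsup (fun m : ℕ =>
      ((((Finset.range m).filter fun i => ∀ j k : Fin n, j < k →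
        δ < dist (f^[i] (x j)) (f^[i] (x k))).card : ℝ) / m)) Filter.atTop = 1 ∧
  ∀ ε : ℝ, 0 < ε → Filter.limsup (fun m : ℕ =>
      ((((Finset.range m).filter fun i => ∀ j k : Fin n, j < k →
        dist (f^[i] (x j)) (f^[i] (x k)) < ε).card : ℝ) / m)) Filter.atTop = 1

/-- `S` is a distal set for `f`. -/
def DistalSet {X : Type*} [MetricSpace X] (f : X → X) (S : Set X) : Prop :=
  ∀ n : ℕ, 2 ≤ n → ∀ x : Fin n → X, (∀ j, x j ∈ S) → Function.Injective x →
    ∃ c : ℝ, 0 < c ∧ ∀ i : ℕ, ∀ j k : Fin n, j < k → c ≤ dist (f^[i] (x j)) (f^[i] (x k))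

/-- `f` restricted to `Λ` is minimal: `Λ` is the orbit closure of each of its points. -/
def MinimalOn {X : Type*} [TopologicalSpace X] (f : X → X) (Λ : Set X) : Prop :=
  ∀ x ∈ Λ, closure (Set.range fun i : ℕ => f^[i] x) = Λ

/-- `f` restricted to `Λ` is equicontinuous. -/
def EquicontOnSet {X : Type*} [MetricSpace X] (f : X → X) (Λ : Set X) : Prop :=
  ∀ ε : ℝ, 0 < ε → ∃ δ : ℝ, 0 < δ ∧ ∀ x ∈ Λ, ∀ y ∈ Λ, dist x y ≤ δ →
    ∀ i : ℕ, dist (f^[i] x) (f^[i] y) ≤ ε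

/-- Topological transitivity. -/
def IsTransitive {Z : Type*} [TopologicalSpace Z] (h : Z → Z) : Prop :=
  ∀ U V : Set Z, IsOpen U → IsOpen V → U.Nonempty → V.Nonempty →
    ∃ i : ℕ, ∃ z ∈ U, h^[i] z ∈ V

/-- `N(x,ε)` : times at which the orbit of `x` returns ε-close to `x`. -/
def retTimes {X : Type*} [MetricSpace X] (f : X → X) (x : X) (ε : ℝ) : Set ℕ :=
  {i : ℕ | dist x (f^[i] x) ≤ ε}

/-- `R(f,𝓕)`: the set of `𝓕`-recurrent points. -/
def FRecurrent {X : Type*} [MetricSpace X] (f : X → X) (F : Set (Set ℕ)) : Set X :=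
  {x | ∀ ε : ℝ, 0 < ε → retTimes f x ε ∈ F}

/-- The dual family `𝓕*`. -/
def dualFamily (F : Set (Set ℕ)) : Set (Set ℕ) :=
  {A | ∀ B ∈ F, (A ∩ B).Nonempty}

/-- `Δ(A)`, the difference set of `A`. -/
def deltaSet (A : Set ℕ) : Set ℕ :=
  {i | ∃ j ∈ A, ∃ k ∈ A, j ≤ k ∧ i = k - j}

/-- `Δ(𝓕)`. -/
def deltaFamily (F : Set (Set ℕ)) : Set (Set ℕ) :=
  {B | ∃ A ∈ F, 0 ∈ A ∧ deltaSet A ⊆ B}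

/-- `𝓕`-transitivity: `N(U,V) ∈ 𝓕` for all nonempty open `U, V`. -/
def FTransitive {X : Type*} [TopologicalSpace X] (f : X → X) (F : Set (Set ℕ)) : Prop :=
  ∀ U V : Set X, IsOpen U → IsOpen V → U.Nonempty → V.Nonempty →
    {i : ℕ | ∃ x ∈ U, f^[i] x ∈ V} ∈ F


section LimsupDist

variable {ι Y : Type*} [PseudoMetricSpace Y] {l : Filter ι}

-- Excludes the junk value `0` of a real-valued `limsup` along an unbounded function.
lemma isBoundedUnder_dist [BoundedSpace Y] (u v : ι → Y) :
    l.IsBoundedUnder (· ≤ ·) fun i => dist (u i) (v i) :=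
  isBoundedUnder_of ⟨Metric.diam (Set.univ : Set Y), fun _ =>
    Metric.dist_le_diam_of_mem (.all _) (Set.mem_univ _) (Set.mem_univ _)⟩

lemma isCoboundedUnder_dist [l.NeBot] (u v : ι → Y) :
    l.IsCoboundedUnder (· ≤ ·) fun i => dist (u i) (v i) :=
  isCoboundedUnder_le_of_le l fun _ => dist_nonneg

lemma limsup_dist_le_limsup_dist_add [l.NeBot] {u v w : ι → Y} {c : ℝ}
    (huv : ∀ᶠ i in l, dist (u i) (v i) ≤ c)
    (hbdd : l.IsBoundedUnder (· ≤ ·) fun i => dist (u i) (w i)) :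
    limsup (fun i => dist (v i) (w i)) l ≤ limsup (fun i => dist (u i) (w i)) l + c := by
  have htriangle : ∀ᶠ i in l, dist (v i) (w i) ≤ dist (u i) (w i) + c := by
    filter_upwards [huv] with i hi
    linarith [dist_triangle_left (v i) (w i) (u i)]
  calc
    limsup (fun i => dist (v i) (w i)) l ≤ limsup (fun i => dist (u i) (w i) + c) l :=
      limsup_le_limsup htriangle (isCoboundedUnder_dist v w)
        (isBoundedUnder_le_add hbdd isBoundedUnder_const)
    _ = limsup (fun i => dist (u i) (w i)) l + c :=
      limsup_add_const l _ c hbdd (isCoboundedUnder_dist u w)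

end LimsupDist

section StableSets

variable {X : Type*} [MetricSpace X] {f : X → X}

lemma Vs_subset_Vs_add [BoundedSpace X] {x y : X} {ε η : ℝ}
    (hxy : ∀ᶠ i in atTop, dist (f^[i] x) (f^[i] y) ≤ η) : Vs f x ε ⊆ Vs f y (ε + η) :=
  fun _ hz => (limsup_dist_le_limsup_dist_add hxy (isBoundedUnder_dist _ _)).trans
    (add_le_add_left hz η)

lemma EquicontOnSet.exists_mem_forall_dist_iterate_le {Λ Γ : Set X} (heq : EquicontOnSet f Λ)
    (hΓsub : Γ ⊆ Λ) (hΓdense : Λ ⊆ closure Γ) {η : ℝ} (hη : 0 < η) {x : X} (hx : x ∈ Λ) :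
    ∃ y ∈ Γ, ∀ i : ℕ, dist (f^[i] x) (f^[i] y) ≤ η := by
  obtain ⟨δ, hδ, hclose⟩ := heq η hη
  obtain ⟨y, hy, hxy⟩ := Metric.mem_closure_iff.1 (hΓdense hx) δ hδ
  exact ⟨y, hy, hclose x hx y (hΓsub hy) hxy.le⟩

theorem union_closure_countable_general [BoundedSpace X] {Λ Γ : Set X}
    (heq : EquicontOnSet f Λ) (hΓsub : Γ ⊆ Λ) (hΓdense : Λ ⊆ closure Γ)
    (ε : ℝ) {η : ℝ} (hη : 0 < η) :
    (⋃ x ∈ Λ, closure (Vs f x ε)) ⊆ ⋃ x ∈ Γ, closure (Vs f x (ε + η)) := by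
  refine Set.iUnion₂_subset fun x hx => ?_
  obtain ⟨y, hy, hxy⟩ := heq.exists_mem_forall_dist_iterate_le hΓsub hΓdense hη hx
  have hVs : Vs f x ε ⊆ Vs f y (ε + η) := Vs_subset_Vs_add (.of_forall hxy)
  exact (closure_mono hVs).trans
    (Set.subset_biUnion_of_mem (u := fun y => closure (Vs f y (ε + η))) hy)

end StableSets

/-- Lemma 2.2: with `f|_Λ` minimal and equicontinuous and `Γ` a countable
dense subset of `Λ`, if `X = ⋃_{x∈Λ} closure (V_ε^s(x))`, then
`X = ⋃_{x∈Γ} closure (V_{2ε}^s(x))`. -/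
theorem union_closure_countable {X : Type*} [MetricSpace X] [CompactSpace X]
    (f : X → X) (hf : Continuous f) (Λ : Set X)
    (hclosed : IsClosed Λ) (hinv : Set.MapsTo f Λ Λ)
    (hmin : MinimalOn f Λ) (heq : EquicontOnSet f Λ)
    (Γ : Set X) (hΓsub : Γ ⊆ Λ) (hΓcount : Γ.Countable) (hΓdense : Λ ⊆ closure Γ) :
    ∀ ε : ℝ, 0 < ε → (⋃ x ∈ Λ, closure (Vs f x ε)) = Set.univ →
      (⋃ x ∈ Γ, closure (Vs f x (2 * ε))) = Set.univ := by
  intro ε hε hX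
  simpa only [hX, Set.univ_subset_iff, ← two_mul] using
    union_closure_countable_general heq hΓsub hΓdense ε hε
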